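/- Let y : ℕ → ℝ be defined by y₀ = 1 and y_k = y_{k-1}/(1 + y_{k-1}·ln(1 + y_{k-1})) for k ≥ 1. Then the limit C = lim_{k→∞} k^{3/2}·[y_k - (1/(√2·k^{1/2}) + 1/(4k) - (7/(48√2))·ln(k)/k^{3/2})] exists as a real number. -/

import Mathlib

open Filter Topology

lemma aux_step (x : ℝ) (hx : 2 ≤ x) :
    |((x + Real.log (1 + 1 / x))^2 + (x + Real.log (1 + 1 / x))
      - 7/6 * Real.log (x + Real.log (1 + 1 / x))) - (x^2 + x - 7/6 * Real.log x) - 2|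
      ≤ 100 * (1 / x)^3 := by
  have hx0 : 0 < x := by linarith
  obtain ⟨u, hu⟩ : ∃ u, u = 1 / x := ⟨_, rfl⟩
  have hu0 : 0 < u := by rw [hu]; positivity
  have hu1 : u ≤ 1/2 := by
    rw [hu]; exact one_div_le_one_div_of_le (by norm_num) hx
  have hxu : x * u = 1 := by rw [hu]; field_simp
  rw [← hu]
  obtain ⟨L, hL⟩ : ∃ L, L = Real.log (1 + u) := ⟨_, rfl⟩
  rw [← hL]
  have h1 := Real.abs_log_sub_add_sum_range_le (x := -u) (by rw [abs_neg, abs_of_pos hu0]; linarith) 3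
  simp only [Finset.sum_range_succ, Finset.sum_range_zero, abs_neg, abs_of_pos hu0, sub_neg_eq_add, ← hL] at h1
  have h2 : u^(3+1) / (1 - u) ≤ 2 * u^4 := by
    rw [div_le_iff₀ (by linarith)]
    have h4 := pow_pos hu0 4
    have : u^4 * u ≤ u^4 * (1/2) := mul_le_mul_of_nonneg_left hu1 h4.le
    norm_num
    linarith
  have h3 := h1.trans h2
  norm_num at h3
  obtain ⟨t, ht⟩ : ∃ t, L = u - u^2/2 + u^3/3 + t * u^4 := by
    refine ⟨(L - (u - u^2/2 + u^3/3)) / u^4, ?_⟩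
    field_simp; ring
  have ht2 : |t| ≤ 2 := by
    have e : -u + u^2/2 + (-u)^3/3 + L = t * u^4 := by rw [ht]; ring
    have e2 : |t * u^4| ≤ 2 * u^4 := by
      rw [← e]; convert h3 using 2
    rw [abs_mul, abs_of_pos (pow_pos hu0 4)] at e2
    exact le_of_mul_le_mul_right e2 (pow_pos hu0 4)
  have hLpos : 0 ≤ L := by rw [hL]; exact Real.log_nonneg (by linarith)
  have hLu : L ≤ u := by
    rw [hL]; have := Real.log_le_sub_one_of_pos (x := 1 + u) (by linarith); linarith
  -- second log
  obtain ⟨w, hw⟩ : ∃ w, w = u * L := ⟨_, rfl⟩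
  have hw0 : 0 ≤ w := by rw [hw]; positivity
  have hwu : w ≤ u^2 := by rw [hw]; nlinarith
  have hlog : Real.log (x + L) = Real.log x + Real.log (1 + w) := by
    rw [← Real.log_mul hx0.ne' (by linarith)]
    congr 1; rw [hw]; linear_combination (-L) * hxu
  have hl1 : Real.log (1 + w) ≤ w := by
    have := Real.log_le_sub_one_of_pos (x := 1 + w) (by linarith); linarith
  have hl2 : w - w^2 ≤ Real.log (1 + w) := by
    have := Real.one_sub_inv_le_log_of_pos (x := 1 + w) (by linarith)
    have h : w - w^2 ≤ 1 - (1 + w)⁻¹ := by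
      have : 1 - (1+w)⁻¹ = w / (1 + w) := by field_simp; ring
      rw [this, le_div_iff₀ (by linarith)]
      nlinarith [pow_nonneg hw0 3]
    linarith
  have hxL : x * L = 1 - u/2 + u^2/3 + t * u^3 := by
    rw [ht]; linear_combination (1 - u/2 + u^2/3 + t*u^3) * hxu
  obtain ⟨m, hm⟩ : ∃ m, m = Real.log (1 + w) := ⟨_, rfl⟩
  rw [hlog, ← hm]
  rw [← hm] at hl1 hl2
  have hmw : |m - w| ≤ u^3 := by
    have : w^2 ≤ u^3 := by
      have : w^2 ≤ (u^2)^2 := by gcongr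
      have h3 := pow_pos hu0 3
      have : u^3 * u ≤ u^3 * 1 := mul_le_mul_of_nonneg_left (by linarith) h3.le
      linarith
    have h3 := pow_pos hu0 3
    rw [abs_le]; constructor <;> linarith
  -- L = u - u^2/2 + p u^3
  obtain ⟨p, hp⟩ : ∃ p, p = 1/3 + t * u := ⟨_, rfl⟩
  have hLp : L = u - u^2/2 + p * u^3 := by rw [ht, hp]; ring
  rw [abs_le] at ht2
  have hpb : |p| ≤ 2 := by
    rw [hp, abs_le]
    constructor
    · linarith [mul_le_mul_of_nonneg_right ht2.1 hu0.le]
    · linarith [mul_le_mul_of_nonneg_right ht2.2 hu0.le]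
  have key : (x + L)^2 + (x + L) - 7/6 * (Real.log x + m) - (x^2 + x - 7/6 * Real.log x) - 2
      = u^3 * (2 * t + (-1 + 2 * p * u + u/4 - p * u^2 + p^2 * u^3) + p - 7/6 * (-1/2 + p * u)) - 7/6 * (m - w) := by
    rw [hw]
    have : (x + L)^2 = x^2 + 2 * (x * L) + L^2 := by ring
    rw [this, hxL, hLp]; ring
  rw [key]
  have hb : |2 * t + (-1 + 2 * p * u + u/4 - p * u^2 + p^2 * u^3) + p - 7/6 * (-1/2 + p * u)| ≤ 50 := by
    have hua : |u| ≤ 1/2 := by rw [abs_of_pos hu0]; exact hu1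
    have a1 : |p * u| ≤ 1 := by
      rw [abs_mul]
      exact (mul_le_mul hpb hua (abs_nonneg _) (by norm_num)).trans (by norm_num)
    have a2 : |p * u^2| ≤ 1 := by
      rw [show p * u^2 = (p*u)*u by ring, abs_mul]
      exact (mul_le_mul a1 hua (abs_nonneg _) (by norm_num)).trans (by norm_num)
    have a4 : |(p*u)*(p*u)| ≤ 1 := by
      rw [abs_mul]
      exact (mul_le_mul a1 a1 (abs_nonneg _) (by norm_num)).trans (by norm_num)
    have a3 : |p^2 * u^3| ≤ 1 := by
      rw [show p^2 * u^3 = ((p*u)*(p*u))*u by ring, abs_mul]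
      exact (mul_le_mul a4 hua (abs_nonneg _) (by norm_num)).trans (by norm_num)
    rw [abs_le] at hpb a1
    rw [abs_le] at a2 a3 ⊢
    constructor <;> linarith
  have hu3 := pow_pos hu0 3
  have hb2 : |u^3 * (2 * t + (-1 + 2 * p * u + u/4 - p * u^2 + p^2 * u^3) + p - 7/6 * (-1/2 + p * u))| ≤ u^3 * 50 := by
    rw [abs_mul, abs_of_pos hu3]; gcongr
  rw [abs_le] at hb2 hmw ⊢
  constructor <;> linarith

lemma aux_final (x s E δ : ℕ → ℝ) (D : ℝ) (hx : Tendsto x atTop atTop)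
    (hs : ∀ᶠ k in atTop, 0 < s k)
    (hE : ∀ k, E k = (x k + 1/2)^2 - (s k)^2)
    (hδ : ∀ k, δ k = x k + 1/2 - s k)
    (hD : Tendsto (fun k => E k - 7/6 * Real.log (x k)) atTop (𝓝 D)) :
    ∃ C, Tendsto (fun k => (s k)^3 * (1 / x k - 1 / s k - 1 / (2 * (s k)^2))
      + 7/12 * Real.log (s k)) atTop (𝓝 C) := by
  have hxp : ∀ᶠ k in atTop, 0 < x k := hx.eventually_gt_atTop 0
  have hinv : Tendsto (fun k => 1 / x k) atTop (𝓝 0) := by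
    simpa [Function.comp_def] using tendsto_inv_atTop_zero.comp hx
  have hlx : Tendsto (fun k => Real.log (x k) / x k) atTop (𝓝 0) :=
    (Real.isLittleO_log_id_atTop.tendsto_div_nhds_zero).comp hx
  have hEx : Tendsto (fun k => E k / x k) atTop (𝓝 0) := by
    have := (hD.mul hinv).add (hlx.const_mul (7/6))
    simp only [mul_zero, add_zero] at this
    refine this.congr fun k => ?_
    ring
  have hδ0 : Tendsto δ atTop (𝓝 0) := by
    refine squeeze_zero_norm' ?_ (by simpa using hEx.abs)
    filter_upwards [hs, hxp] with k h1 h2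
    have : δ k = E k / (x k + 1/2 + s k) := by
      rw [hE, hδ]; field_simp; ring
    rw [this, Real.norm_eq_abs, abs_div, abs_div, abs_of_pos h2, abs_of_pos (by linarith : 0 < x k + 1/2 + s k)]
    gcongr; linarith
  have hsx : Tendsto (fun k => s k / x k) atTop (𝓝 1) := by
    have := ((hδ0.const_sub (1/2)).mul hinv).const_add 1
    simp only [mul_zero, add_zero] at this
    refine this.congr' ?_
    filter_upwards [hxp] with k h2
    rw [hδ]; field_simp; ring
  have hlog : Tendsto (fun k => Real.log (s k) - Real.log (x k)) atTop (𝓝 0) := by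
    have := hsx.log one_ne_zero
    rw [Real.log_one] at this
    refine this.congr' ?_
    filter_upwards [hs, hxp] with k h1 h2
    rw [Real.log_div h1.ne' h2.ne']
  have T1 := ((hsx.const_mul (1/2)).mul ((hδ0.const_sub (1/2)).add (hδ0.pow 2)))
  have T2 := ((hδ0.const_sub (1/2)).mul hEx).const_mul (1/2)
  have T3 := (hlog.const_mul (7/12)).sub (hD.const_mul (1/2))
  refine ⟨_, ((T1.sub T2).add T3).congr' ?_⟩
  filter_upwards [hs, hxp] with k h1 h2
  rw [hδ, hE]; field_simp; ring

theorem stmt_9 (y : ℕ → ℝ) (h0 : y 0 = 1)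
    (hrec : ∀ k, y (k + 1) = y k / (1 + y k * Real.log (1 + y k))) :
    ∃ C : ℝ, Tendsto (fun k : ℕ => (k : ℝ)^((3:ℝ)/2) *
        (y k - (1 / (Real.sqrt 2 * (k : ℝ)^((1:ℝ)/2)) + 1 / (4 * (k : ℝ)) -
          (7 / (48 * Real.sqrt 2)) * Real.log k / (k : ℝ)^((3:ℝ)/2))))
      atTop (𝓝 C) := by
  have hypos : ∀ k, 0 < y k := by
    intro k
    induction k with
    | zero => rw [h0]; norm_num
    | succ k ih =>
      rw [hrec]
      have : 0 ≤ Real.log (1 + y k) := Real.log_nonneg (by linarith)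
      positivity
  obtain ⟨x, hxy⟩ : ∃ x : ℕ → ℝ, ∀ k, x k = 1 / y k := ⟨_, fun _ => rfl⟩
  have hyx : ∀ k, y k = 1 / x k := fun k => by rw [hxy]; simp
  have hxpos : ∀ k, 0 < x k := fun k => by rw [hxy]; exact one_div_pos.2 (hypos k)
  have hxrec : ∀ k, x (k+1) = x k + Real.log (1 + 1 / x k) := by
    intro k
    rw [← hyx, hxy, hxy, hrec]
    have := hypos k
    field_simp
  have hlogpos : ∀ k, 0 ≤ Real.log (1 + 1 / x k) := fun k =>
    Real.log_nonneg (by have := one_div_pos.2 (hxpos k); linarith)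
  have hx1 : ∀ k, 1 ≤ x k := by
    intro k
    induction k with
    | zero => rw [hxy, h0]; norm_num
    | succ k ih => rw [hxrec]; linarith [hlogpos k]
  have hxsq : ∀ k : ℕ, (k : ℝ) + 1 ≤ (x k)^2 := by
    intro k
    induction k with
    | zero => push_cast; nlinarith [hx1 0]
    | succ k ih =>
      have hp := hxpos k
      have h1 := hx1 k
      have hl := Real.one_sub_inv_le_log_of_pos (x := 1 + 1 / x k) (by positivity)
      have e : 1 - (1 + 1 / x k)⁻¹ = 1 / (x k + 1) := by field_simp; ring
      rw [e] at hl
      have h2 : 1/2 ≤ x k * Real.log (1 + 1 / x k) := by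
        refine le_trans ?_ (mul_le_mul_of_nonneg_left hl hp.le)
        rw [mul_one_div, div_le_div_iff₀ (by norm_num) (by linarith)]; linarith
      rw [hxrec]; push_cast
      nlinarith [sq_nonneg (Real.log (1 + 1 / x k))]
  have hxsqrt : ∀ k : ℕ, Real.sqrt k ≤ x k := fun k =>
    Real.sqrt_le_iff.2 ⟨(hxpos k).le, by linarith [hxsq k]⟩
  have hxtop : Tendsto x atTop atTop :=
    tendsto_atTop_mono hxsqrt (Real.tendsto_sqrt_atTop.comp tendsto_natCast_atTop_atTop)
  obtain ⟨W, hW⟩ : ∃ W : ℕ → ℝ, ∀ k, W k = (x k)^2 + x k - 7/6 * Real.log (x k) - 2 * k :=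
    ⟨_, fun _ => rfl⟩
  have hsum : Summable (fun k => W (k+1) - W k) := by
    have hs0 : Summable (fun k : ℕ => 100 * (1 / (k:ℝ)^((3:ℝ)/2))) :=
      (Real.summable_one_div_nat_rpow.2 (by norm_num)).mul_left 100
    refine Summable.of_norm_bounded_eventually_nat hs0 ?_
    filter_upwards [hxtop.eventually_ge_atTop 2, eventually_gt_atTop 0] with k hk hk0
    have hk0' : (0:ℝ) < k := by exact_mod_cast hk0
    have h1 := aux_step (x k) hk
    rw [← hxrec] at h1
    have e : W (k+1) - W k = (x (k+1))^2 + x (k+1) - 7/6 * Real.log (x (k+1))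
       - ((x k)^2 + x k - 7/6 * Real.log (x k)) - 2 := by
      rw [hW, hW]; push_cast; ring
    rw [e, Real.norm_eq_abs]
    refine h1.trans ?_
    have e3 : (k:ℝ)^((3:ℝ)/2) = (Real.sqrt k)^3 := by
      rw [Real.sqrt_eq_rpow, ← Real.rpow_natCast, ← Real.rpow_mul hk0'.le]; norm_num
    rw [e3, one_div_pow]
    have := Real.sqrt_pos.2 hk0'
    gcongr
    exact hxsqrt k
  have hWlim : ∃ D, Tendsto W atTop (𝓝 D) := by
    have := hsum.hasSum.tendsto_sum_nat
    simp only [Finset.sum_range_sub] at this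
    exact ⟨_, (this.add_const (W 0)).congr fun k => by ring⟩
  obtain ⟨D, hD⟩ := hWlim
  obtain ⟨s, hs⟩ : ∃ s : ℕ → ℝ, ∀ k, s k = Real.sqrt 2 * Real.sqrt k := ⟨_, fun _ => rfl⟩
  have hs2 : ∀ k, (s k)^2 = 2 * k := fun k => by
    rw [hs, mul_pow, Real.sq_sqrt (by norm_num), Real.sq_sqrt (by positivity)]
  have hspos : ∀ᶠ k in atTop, 0 < s k := by
    filter_upwards [eventually_gt_atTop 0] with k hk0
    have hk0' : (0:ℝ) < k := by exact_mod_cast hk0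
    rw [hs]; positivity
  obtain ⟨C, hC⟩ := aux_final x s (fun k => (x k + 1/2)^2 - (s k)^2) (fun k => x k + 1/2 - s k)
    (D + 1/4) hxtop hspos (fun _ => rfl) (fun _ => rfl)
    ((hD.add_const (1/4)).congr fun k => by rw [hW, hs2]; ring)
  refine ⟨_, ((hC.sub_const (7/24 * Real.log 2)).const_mul (1 / (2 * Real.sqrt 2))).congr' ?_⟩
  filter_upwards [eventually_gt_atTop 0] with k hk0
  have hk0' : (0:ℝ) < k := by exact_mod_cast hk0
  have e3 : (k:ℝ)^((3:ℝ)/2) = (Real.sqrt k)^3 := by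
    rw [Real.sqrt_eq_rpow, ← Real.rpow_natCast, ← Real.rpow_mul hk0'.le]; norm_num
  have hq := Real.sqrt_pos.2 hk0'
  have hr : 0 < Real.sqrt 2 := by positivity
  have hr2 : Real.sqrt 2 ^ 2 = 2 := Real.sq_sqrt (by norm_num)
  have hlogs : Real.log (s k) = 1/2 * Real.log 2 + 1/2 * Real.log k := by
    rw [hs, Real.log_mul hr.ne' hq.ne', Real.log_sqrt (by norm_num), Real.log_sqrt hk0'.le]; ring
  rw [e3, ← Real.sqrt_eq_rpow, hlogs, hs, hyx]
  have hkq : (k:ℝ) = Real.sqrt k ^ 2 := (Real.sq_sqrt hk0'.le).symm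
  have hxk := hxpos k
  obtain ⟨l, hl⟩ : ∃ l, l = Real.log k := ⟨_, rfl⟩
  rw [← hl]
  obtain ⟨q, hqq⟩ : ∃ q, q = Real.sqrt k := ⟨_, rfl⟩
  rw [← hqq] at hkq hq ⊢
  rw [hkq]
  obtain ⟨r, hrr⟩ : ∃ r, r = Real.sqrt 2 := ⟨_, rfl⟩
  rw [← hrr] at hr hr2 ⊢
  have hr3 : r^3 = 2 * r := by rw [pow_succ, hr2]
  have hrinv : 1 / r = r / 2 := by field_simp; linarith
  rw [mul_pow, hr3, mul_pow, hr2]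
  field_simp
  ring
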